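/- arXiv:1803.10702 — 4 statements merged into one kernel-verified Lean document; each statement's English description precedes it below -/
import Mathlib

section
/- Let n ≥ 2 and let C ⊆ ℝⁿ be a convex body with 0 in its interior, and let k ∈ {0,…,n−2}. Suppose there exist points x₁,…,x_{n−k} ∈ bd(C) and a convex body A ⊆ ℝⁿ with dim(A) > k such that xᵢ + A ⊆ bd(C) for all i = 1,…,n−k, and there are outer normal vectors uᵢ ∈ N(C,xᵢ) \ {0}, i = 1,…,n−k, with 0 ∈ conv{u₁,…,u_{n−k}}. Then dim(cc({x₁,…,x_{n−k}},C)) > k; in fact −A ⊆ cc({x₁,…,x_{n−k}},C). -/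
/-!
Write `X = {x₁, …, x_{n-k}}`. Everything follows from `R(X,C) = 1`: for `a ∈ A` each
`xᵢ + a` lies in `C`, so `X ⊆ C + (-a)`, that is, `-a ∈ cc(X,C)`; and the direction of `A` is
contained in that of any set containing `-A`.

Clearly `R(X,C) ≤ 1`, since `X ⊆ C`. If `X ⊆ ρC + t` with `0 ≤ ρ < 1`, say `xᵢ = ρcᵢ + t`, then
`⟨t,uᵢ⟩ = h(C,uᵢ) - ρ⟨cᵢ,uᵢ⟩ ≥ (1 - ρ) h(C,uᵢ) > 0` for all `i`, because `0` is interior to `C`.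
So all the `uᵢ` lie in the open half-space `{v : ⟨t,v⟩ > 0}`, and hence so does their convex hull,
contradicting `0 ∈ conv{u₁, …, u_{n-k}}`.
-/


open Set Pointwise RealInnerProductSpace

/-- A convex body: a nonempty compact convex set. -/
def IsConvexBody {n : ℕ} (K : Set (EuclideanSpace ℝ (Fin n))) : Prop :=
  K.Nonempty ∧ IsCompact K ∧ Convex ℝ K

/-- The circumradius `R(A,C)` of `A` with respect to the gauge body `C`:
`inf {ρ ≥ 0 : ∃ x, A ⊆ ρC + x}`. -/
noncomputable def circR {n : ℕ} (A C : Set (EuclideanSpace ℝ (Fin n))) : ℝ :=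
  sInf {ρ : ℝ | 0 ≤ ρ ∧ ∃ x, A ⊆ ρ • C + {x}}

/-- The set of circumcenters (Chebyshev set) `cc(A,C) = {x : A ⊆ R(A,C)·C + x}`. -/
noncomputable def ccSet {n : ℕ} (A C : Set (EuclideanSpace ℝ (Fin n))) :
    Set (EuclideanSpace ℝ (Fin n)) :=
  {x | A ⊆ circR A C • C + {x}}

/-- The support function `h(K,u) = sup {⟨y,u⟩ : y ∈ K}`. -/
noncomputable def suppFn {n : ℕ} (K : Set (EuclideanSpace ℝ (Fin n)))
    (u : EuclideanSpace ℝ (Fin n)) : ℝ :=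
  sSup ((fun y => ⟪y, u⟫) '' K)

/-- The normal cone `N(K,x) = {u : h(K,u) = ⟨x,u⟩}` of `K` at `x`. -/
noncomputable def normalCone {n : ℕ} (K : Set (EuclideanSpace ℝ (Fin n)))
    (x : EuclideanSpace ℝ (Fin n)) : Set (EuclideanSpace ℝ (Fin n)) :=
  {u | suppFn K u = ⟪x, u⟫}

/-- The dimension of the affine span of a set. -/
noncomputable def adim {n : ℕ} (A : Set (EuclideanSpace ℝ (Fin n))) : ℕ :=
  Module.finrank ℝ (affineSpan ℝ A).direction

/-- `S` is a support set of `K`: `S = {x ∈ K : ⟨x,u⟩ = h(K,u)}` for some `u ≠ 0`. -/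
noncomputable def IsSupportSet {n : ℕ} (K S : Set (EuclideanSpace ℝ (Fin n))) : Prop :=
  ∃ u : EuclideanSpace ℝ (Fin n), u ≠ 0 ∧ S = {x ∈ K | ⟪x, u⟫ = suppFn K u}

lemma inner_le_suppFn {n : ℕ} {C : Set (EuclideanSpace ℝ (Fin n))} (hC : IsCompact C)
    {y : EuclideanSpace ℝ (Fin n)} (hy : y ∈ C) (u : EuclideanSpace ℝ (Fin n)) :
    ⟪y, u⟫ ≤ suppFn C u :=
  le_csSup (hC.image (by fun_prop : Continuous fun y : EuclideanSpace ℝ (Fin n) => ⟪y, u⟫)).bddAbove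
    (mem_image_of_mem _ hy)

lemma suppFn_pos {n : ℕ} {C : Set (EuclideanSpace ℝ (Fin n))} (hC : IsCompact C)
    (hC0 : 0 ∈ interior C) {u : EuclideanSpace ℝ (Fin n)} (hu : u ≠ 0) : 0 < suppFn C u := by
  -- a small positive multiple of `u` lies in `C`
  have hlim : Filter.Tendsto (fun r : ℝ => r • u) (nhdsWithin 0 (Ioi 0)) (nhds 0) := by
    have h : Continuous fun r : ℝ => r • u := by fun_prop
    simpa using (h.tendsto 0).mono_left nhdsWithin_le_nhds
  obtain ⟨r, hrC, hr⟩ :=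
    ((hlim.eventually (mem_interior_iff_mem_nhds.1 hC0)).and self_mem_nhdsWithin).exists
  have h := inner_le_suppFn hC hrC u
  rw [real_inner_smul_left] at h
  exact (mul_pos hr (real_inner_self_pos.2 hu)).trans_le h

/-- Boundary points with outer normals that positively span `0` cannot be covered by a
translate of a smaller homothet of `C`. -/
lemma circR_range_eq_one {n : ℕ} {ι : Type*} {C : Set (EuclideanSpace ℝ (Fin n))}
    (hC : IsCompact C) (hC0 : 0 ∈ interior C) {x u : ι → EuclideanSpace ℝ (Fin n)}
    (hx : ∀ i, x i ∈ C) (hu : ∀ i, u i ∈ normalCone C (x i) \ {0})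
    (hu0 : 0 ∈ convexHull ℝ (range u)) : circR (range x) C = 1 := by
  have hmem : (1 : ℝ) ∈ {ρ : ℝ | 0 ≤ ρ ∧ ∃ t, range x ⊆ ρ • C + {t}} := by
    refine ⟨zero_le_one, 0, ?_⟩
    rintro _ ⟨i, rfl⟩
    simpa using hx i
  refine le_antisymm (csInf_le ⟨0, fun ρ hρ => hρ.1⟩ hmem) (le_csInf ⟨1, hmem⟩ ?_)
  rintro ρ ⟨hρ, t, ht⟩
  by_contra! hρ1
  have hsub : range u ⊆ {v | 0 < ⟪t, v⟫} := by
    rintro _ ⟨i, rfl⟩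
    obtain ⟨_, ⟨c, hc, rfl⟩, t', ht', hct⟩ := ht (mem_range_self i)
    have hN : suppFn C (u i) = ⟪x i, u i⟫ := (hu i).1
    have hct : ρ • c + t = x i := (mem_singleton_iff.1 ht') ▸ hct
    rw [← hct, inner_add_left, real_inner_smul_left] at hN
    have h1 := mul_le_mul_of_nonneg_left (inner_le_suppFn hC hc (u i)) hρ
    have h2 := mul_pos (sub_pos.2 hρ1) (suppFn_pos hC hC0 (hu i).2)
    change 0 < ⟪t, u i⟫
    linarith
  have hconv : Convex ℝ {v : EuclideanSpace ℝ (Fin n) | 0 < ⟪t, v⟫} :=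
    convex_halfSpace_gt (innerₛₗ ℝ t).isLinear 0
  have h0 : 0 < ⟪t, (0 : EuclideanSpace ℝ (Fin n))⟫ := convexHull_min hsub hconv hu0
  simp at h0

lemma adim_le_of_neg_subset {n : ℕ} {A B : Set (EuclideanSpace ℝ (Fin n))} (h : -A ⊆ B) :
    adim A ≤ adim B := by
  unfold adim
  rw [direction_affineSpan, direction_affineSpan]
  refine Submodule.finrank_mono (Submodule.span_le.2 ?_)
  rintro _ ⟨a, ha, b, hb, rfl⟩
  -- `a - b = (-b) - (-a)`
  have := vsub_mem_vectorSpan ℝ (h (neg_mem_neg.2 hb)) (h (neg_mem_neg.2 ha))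
  simpa [sub_eq_add_neg, add_comm] using this

/-- (c_k') ⇒ (b_k'): the boundary configuration yields `n − k` points whose
Chebyshev set has dimension `> k`; in fact `−A ⊆ cc({x₁,…,x_{n−k}},C)`. -/
theorem boundary_structure_imp_points_dim_gt {n : ℕ} (hn : 2 ≤ n)
    (C : Set (EuclideanSpace ℝ (Fin n))) (hC : IsConvexBody C)
    (hC0 : 0 ∈ interior C) (k : ℕ) (hk : k ≤ n - 2)
    (x : Fin (n - k) → EuclideanSpace ℝ (Fin n))
    (A : Set (EuclideanSpace ℝ (Fin n)))
    (hx : ∀ i, x i ∈ frontier C) (hA : IsConvexBody A) (hAdim : k < adim A)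
    (hxA : ∀ i, x i +ᵥ A ⊆ frontier C)
    (u : Fin (n - k) → EuclideanSpace ℝ (Fin n))
    (hu : ∀ i, u i ∈ normalCone C (x i) \ {0})
    (hu0 : 0 ∈ convexHull ℝ (Set.range u)) :
    -A ⊆ ccSet (Set.range x) C ∧ k < adim (ccSet (Set.range x) C) := by
  have hfr : frontier C ⊆ C := hC.2.1.isClosed.frontier_subset
  have hsub : -A ⊆ ccSet (Set.range x) C := by
    intro y hy
    change range x ⊆ circR (range x) C • C + {y}
    rw [circR_range_eq_one hC.2.1 hC0 (fun i => hfr (hx i)) hu hu0, one_smul]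
    rintro _ ⟨i, rfl⟩
    exact ⟨x i + -y, hfr (hxA i (vadd_mem_vadd_set hy)), y, rfl, by simp⟩
  exact ⟨hsub, hAdim.trans_le (adim_le_of_neg_subset hsub)⟩
end

section
/- Let C ⊆ ℝⁿ be a convex body with 0 in its interior, let K ⊆ C be a convex body with R(K,C) = 1, let x₁,…,x_m ∈ K ∩ bd(C), let uᵢ ∈ N(C,xᵢ) \ {0} and λᵢ > 0 for i = 1,…,m with Σᵢ λᵢuᵢ = 0. Then for every circumcenter v ∈ cc(K,C) and every i = 1,…,m, the point xᵢ − v lies on the boundary of C. -/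
/-!
Each `xⱼ - v` lies in `C`, because `R(K,C) = 1`; as `uⱼ` is an outer normal of `C` at `xⱼ`, this
gives `⟪v, uⱼ⟫ ≥ 0` for every `j`. The relation `Σ λⱼuⱼ = 0` makes the positive combination
`Σ λⱼ⟪v, uⱼ⟫` vanish, so every `⟪v, uⱼ⟫` is zero. Hence `xᵢ - v` maximizes `⟪·, uᵢ⟫` over `C`,
just as `xᵢ` does, and a nonzero functional cannot be maximal at an interior point
(`not_mem_interior_of_inner_max`).
-/

open Set Pointwise RealInnerProductSpace

theorem inner_le_of_mem_normalCone {n : ℕ} {C : Set (EuclideanSpace ℝ (Fin n))}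
    (hC : IsCompact C) {x u y : EuclideanSpace ℝ (Fin n)} (hu : u ∈ normalCone C x)
    (hy : y ∈ C) : ⟪y, u⟫ ≤ ⟪x, u⟫ := by
  have hsupp : suppFn C u = ⟪x, u⟫ := hu
  rw [← hsupp]
  -- Compactness bounds the set, so that the `sSup` in `suppFn` is a genuine supremum.
  exact le_csSup (hC.image (by fun_prop)).bddAbove (mem_image_of_mem _ hy)

/-- A nonzero linear functional attains no maximum over a set at an interior point, since a
small step in the direction `u` stays in the set and increases `⟪·, u⟫`. -/
theorem not_mem_interior_of_inner_max {n : ℕ} {C : Set (EuclideanSpace ℝ (Fin n))}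
    {p u : EuclideanSpace ℝ (Fin n)} (hu : u ≠ 0) (hmax : ∀ y ∈ C, ⟪y, u⟫ ≤ ⟪p, u⟫) :
    p ∉ interior C := by
  intro hp
  have hcont : Filter.Tendsto (fun t : ℝ => p + t • u) (nhdsWithin 0 (Ioi 0)) (nhds p) := by
    have h : Continuous fun t : ℝ => p + t • u := by fun_prop
    simpa using (h.tendsto 0).mono_left nhdsWithin_le_nhds
  obtain ⟨t, htC, ht⟩ :=
    ((hcont.eventually (mem_interior_iff_mem_nhds.1 hp)).and self_mem_nhdsWithin).exists
  have h := hmax _ htC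
  rw [inner_add_left, real_inner_smul_left] at h
  have hpos : 0 < t * ⟪u, u⟫ := mul_pos ht (real_inner_self_pos.2 hu)
  linarith

/-- If `Σ λᵢuᵢ = 0` with `λᵢ > 0` for outer normals `uᵢ` at points `xᵢ ∈ K ∩ bd(C)`,
then for every circumcenter `v` of `K` the points `xᵢ − v` lie on the boundary of `C`. -/
theorem touching_points_shifted_on_boundary {n m : ℕ}
    (C K : Set (EuclideanSpace ℝ (Fin n))) (hC : IsConvexBody C)
    (hC0 : 0 ∈ interior C) (hK : IsConvexBody K) (hKC : K ⊆ C)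
    (hR : circR K C = 1)
    (x u : Fin m → EuclideanSpace ℝ (Fin n)) (lam : Fin m → ℝ)
    (hx : ∀ i, x i ∈ K ∩ frontier C)
    (hu : ∀ i, u i ∈ normalCone C (x i) \ {0})
    (hlam : ∀ i, 0 < lam i)
    (hsum : ∑ i, lam i • u i = 0) :
    ∀ v ∈ ccSet K C, ∀ i, x i - v ∈ frontier C := by
  intro v hv i
  have hmem : ∀ j, x j - v ∈ C := by
    intro j
    have h := hv (hx j).1
    rw [hR, one_smul, Set.add_singleton] at h
    obtain ⟨c, hc, hcx⟩ := h
    have : x j - v = c := by rw [← hcx]; simp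
    rwa [this]
  -- `⟪xⱼ - v, uⱼ⟫ ≤ ⟪xⱼ, uⱼ⟫` because `xⱼ - v ∈ C`.
  have hnn : ∀ j, 0 ≤ ⟪v, u j⟫ := by
    intro j
    have h := inner_le_of_mem_normalCone hC.2.1 (hu j).1 (hmem j)
    rw [inner_sub_left] at h
    linarith
  have hzero : ∑ j, lam j * ⟪v, u j⟫ = 0 := by
    have h : ⟪v, ∑ j, lam j • u j⟫ = 0 := by rw [hsum, inner_zero_right]
    simpa only [inner_sum, real_inner_smul_right] using h
  have hvi : ⟪v, u i⟫ = 0 := by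
    have h := (Finset.sum_eq_zero_iff_of_nonneg
      (fun j _ => mul_nonneg (hlam j).le (hnn j))).1 hzero i (Finset.mem_univ i)
    exact (mul_eq_zero.1 h).resolve_left (hlam i).ne'
  refine ⟨subset_closure (hmem i), not_mem_interior_of_inner_max (hu i).2 fun y hy => ?_⟩
  rw [inner_sub_left, hvi, sub_zero]
  exact inner_le_of_mem_normalCone hC.2.1 (hu i).1 hy
end

section
/- Let C ⊆ ℝⁿ be a convex body with 0 in its interior, let K ⊆ C be a convex body with R(K,C) = 1, let x₁,…,x_m ∈ K ∩ bd(C), let uᵢ ∈ N(C,xᵢ) \ {0} and λᵢ > 0 for i = 1,…,m with Σᵢ λᵢuᵢ = 0. Then the linear span L = lin{u₁,…,u_m} is contained in the orthogonal complement of cc(K,C) − cc(K,C); in particular dim(L) ≤ n − dim(cc(K,C)). -/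
/-!
A circumcenter `c` satisfies `K ⊆ C + c`, so each touching point `xᵢ` has `xᵢ - c ∈ C`, and
comparing with the support function at the normal `uᵢ` gives `⟪c, uᵢ⟫ ≥ 0`. Since
`Σ λᵢ ⟪c, uᵢ⟫ = ⟪c, 0⟫ = 0` with all `λᵢ > 0`, every `⟪c, uᵢ⟫` vanishes. Hence the differences of
circumcenters are orthogonal to every `uᵢ`, and the dimension bound is
`dim L + dim Lᗮ = n`.
-/

open Set Pointwise RealInnerProductSpace

/-- If the translate `C + c` still contains `x`, then `c` has nonnegative inner product with every
outer normal `u` of `C` at `x`: compactness makes the supremum defining `suppFn C u` a genuine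
upper bound, which is then applied to `x - c ∈ C`. -/
lemma inner_nonneg_of_mem_normalCone {n : ℕ} {C : Set (EuclideanSpace ℝ (Fin n))}
    (hC : IsCompact C) {x u c : EuclideanSpace ℝ (Fin n)} (hu : u ∈ normalCone C x)
    (hx : x - c ∈ C) : 0 ≤ ⟪c, u⟫ := by
  have hb : BddAbove ((fun y => ⟪y, u⟫) '' C) :=
    hC.bddAbove_image (by fun_prop)
  have h1 : ⟪x - c, u⟫ ≤ suppFn C u := le_csSup hb ⟨x - c, hx, rfl⟩
  have h2 : suppFn C u = ⟪x, u⟫ := hu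
  rw [h2, inner_sub_left] at h1
  linarith

/-- If `Σ λᵢuᵢ = 0` with `λᵢ > 0` for outer normals `uᵢ` at points `xᵢ ∈ K ∩ bd(C)`,
then `L = lin{u₁,…,u_m}` is orthogonal to `cc(K,C) − cc(K,C)`; in particular
`dim(L) ≤ n − dim(cc(K,C))`. -/
theorem span_normals_orthogonal_to_ccSet {n m : ℕ}
    (C K : Set (EuclideanSpace ℝ (Fin n))) (hC : IsConvexBody C)
    (hC0 : 0 ∈ interior C) (hK : IsConvexBody K) (hKC : K ⊆ C)
    (hR : circR K C = 1)
    (x u : Fin m → EuclideanSpace ℝ (Fin n)) (lam : Fin m → ℝ)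
    (hx : ∀ i, x i ∈ K ∩ frontier C)
    (hu : ∀ i, u i ∈ normalCone C (x i) \ {0})
    (hlam : ∀ i, 0 < lam i)
    (hsum : ∑ i, lam i • u i = 0) :
    (↑(Submodule.span ℝ (Set.range u)) : Set (EuclideanSpace ℝ (Fin n))) ⊆
        {w | ∀ d ∈ ccSet K C - ccSet K C, ⟪d, w⟫ = 0} ∧
      Module.finrank ℝ (Submodule.span ℝ (Set.range u)) ≤ n - adim (ccSet K C) := by
  have key : ∀ c ∈ ccSet K C, ∀ i, ⟪c, u i⟫ = 0 := by
    intro c hc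
    have hnn : ∀ i, 0 ≤ ⟪c, u i⟫ := by
      intro i
      have h := hc (hx i).1
      rw [hR, one_smul] at h
      obtain ⟨y, hy, z, hz, hyz⟩ := h
      rw [Set.mem_singleton_iff] at hz
      refine inner_nonneg_of_mem_normalCone hC.2.1 (hu i).1 ?_
      rw [← hyz, hz]
      simpa using hy
    have h0 : ∑ i, lam i * ⟪c, u i⟫ = 0 := by
      have h := congrArg (fun v => ⟪c, v⟫) hsum
      simpa [inner_sum, inner_smul_right] using h
    intro i
    have h := (Finset.sum_eq_zero_iff_of_nonneg
      (fun j _ => mul_nonneg (hlam j).le (hnn j))).1 h0 i (Finset.mem_univ i)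
    exact (mul_eq_zero.1 h).resolve_left (hlam i).ne'
  have horth : ∀ w ∈ Submodule.span ℝ (Set.range u),
      ∀ d ∈ ccSet K C - ccSet K C, ⟪d, w⟫ = 0 := by
    rintro w hw _ ⟨a, ha, b, hb, rfl⟩
    have hle : Submodule.span ℝ (Set.range u) ≤ (ℝ ∙ (a - b))ᗮ := by
      rw [Submodule.span_le]
      rintro _ ⟨i, rfl⟩
      rw [SetLike.mem_coe, Submodule.mem_orthogonal_singleton_iff_inner_right, inner_sub_left,
        key a ha i, key b hb i, sub_zero]
    exact Submodule.mem_orthogonal_singleton_iff_inner_right.1 (hle hw)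
  refine ⟨horth, ?_⟩
  have hle : (affineSpan ℝ (ccSet K C)).direction ≤ (Submodule.span ℝ (Set.range u))ᗮ := by
    rw [direction_affineSpan, vectorSpan_def, Submodule.span_le]
    intro d hd w hw
    rw [real_inner_comm]
    exact horth w hw d hd
  have h1 : adim (ccSet K C) ≤ _ := Submodule.finrank_mono hle
  have h2 := (Submodule.span ℝ (Set.range u)).finrank_add_finrank_orthogonal
  rw [finrank_euclideanSpace_fin] at h2
  omega
end

section
/- Let C ⊆ ℝⁿ be a convex body with 0 in its interior and let A ⊆ ℝⁿ be a bounded nonempty set. Then the set of circumcenters cc(A,C) is a nonempty compact convex set whose affine dimension is at most n − 1. -/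
/-!
The set of pairs `(ρ, x)` with `0 ≤ ρ ≤ M` and `A ⊆ ρC + x` is compact, being an intersection over
`a ∈ A` of continuous images of `[0, M] × C`. It is nonempty for large `M`, because `C` absorbs the
bounded set `A`, so its projection to `ρ` has a least element: the infimum defining `R(A,C)` is
attained (`exists_mem_eq_circR`). Thus `cc(A,C)` is nonempty; compactness and convexity follow from
`cc(A,C) = ⋂ a ∈ A, (a - R(A,C) C)`.

For the dimension bound, a convex set of full dimension has an interior point `x`. If `R(A,C) > 0`,
take a small `t > 0`. For every `a ∈ A` the point `x - t (a - x)` is close to `x`, hence a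
circumcenter, so `(1 + t) (a - x) ∈ R(A,C) C`. Therefore `A ⊆ (R(A,C) / (1 + t)) C + x`,
contradicting minimality (`interior_ccSet_eq_empty`). If `R(A,C) = 0`, the Chebyshev set has at most
one point.
-/

open Set Pointwise RealInnerProductSpace

lemma subset_smul_add_singleton_iff {n : ℕ} {A C : Set (EuclideanSpace ℝ (Fin n))} {ρ : ℝ}
    {x : EuclideanSpace ℝ (Fin n)} :
    A ⊆ ρ • C + {x} ↔ ∀ a ∈ A, ∃ c ∈ C, ρ • c = a - x := by
  constructor
  · intro h a ha
    obtain ⟨_, ⟨c, hc, rfl⟩, y, rfl, h2⟩ := h ha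
    exact ⟨c, hc, by simp [← h2]⟩
  · intro h a ha
    obtain ⟨c, hc, h2⟩ := h a ha
    exact ⟨ρ • c, ⟨c, hc, rfl⟩, x, rfl, by simp [h2]⟩

lemma mem_ccSet_iff {n : ℕ} {A C : Set (EuclideanSpace ℝ (Fin n))}
    {x : EuclideanSpace ℝ (Fin n)} :
    x ∈ ccSet A C ↔ ∀ a ∈ A, ∃ c ∈ C, circR A C • c = a - x :=
  subset_smul_add_singleton_iff

lemma exists_subset_smul_add_singleton {n : ℕ} {A C : Set (EuclideanSpace ℝ (Fin n))}
    (hC0 : 0 ∈ interior C) (hAbd : Bornology.IsBounded A) :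
    ∃ M : ℝ, 0 ≤ M ∧ ∃ x, A ⊆ M • C + {x} := by
  have h : Absorbs ℝ C A :=
    (NormedSpace.isVonNBounded_iff ℝ).2 hAbd (mem_interior_iff_mem_nhds.1 hC0)
  obtain ⟨M, hM, hM'⟩ := h.exists_pos
  refine ⟨M, hM.le, 0, ?_⟩
  simpa using hM' M (le_abs_self M)

/-- Admissible radii at most `M`, together with their centers, form a compact set: this yields
existence of a minimal radius without a monotonicity or diagonal argument. -/
lemma isCompact_admissible {n : ℕ} {A C : Set (EuclideanSpace ℝ (Fin n))}
    (hC : IsCompact C) (hA : A.Nonempty) (M : ℝ) :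
    IsCompact {p : ℝ × EuclideanSpace ℝ (Fin n) | p.1 ∈ Icc 0 M ∧ A ⊆ p.1 • C + {p.2}} := by
  have key : {p : ℝ × EuclideanSpace ℝ (Fin n) | p.1 ∈ Icc 0 M ∧ A ⊆ p.1 • C + {p.2}} =
      ⋂ a : A, (fun q : ℝ × EuclideanSpace ℝ (Fin n) => (q.1, (a : EuclideanSpace ℝ (Fin n))
        - q.1 • q.2)) '' (Icc 0 M ×ˢ C) := by
    ext ⟨ρ, x⟩
    simp only [mem_ofPred_eq, subset_smul_add_singleton_iff, mem_iInter, mem_image, Prod.exists,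
      mem_prod, Prod.mk.injEq]
    constructor
    · rintro ⟨hρ, h⟩ ⟨a, ha⟩
      obtain ⟨c, hc, h2⟩ := h a ha
      exact ⟨ρ, c, ⟨hρ, hc⟩, rfl, by simp [h2]⟩
    · intro h
      obtain ⟨a₀, ha₀⟩ := hA
      refine ⟨?_, fun a ha => ?_⟩
      · obtain ⟨_, c, ⟨hρ, -⟩, rfl, -⟩ := h ⟨a₀, ha₀⟩
        exact hρ
      · obtain ⟨_, c, ⟨-, hc⟩, rfl, h2⟩ := h ⟨a, ha⟩
        exact ⟨c, hc, by simp [← h2]⟩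
  have hcpt : ∀ a : A, IsCompact ((fun q : ℝ × EuclideanSpace ℝ (Fin n) =>
      (q.1, (a : EuclideanSpace ℝ (Fin n)) - q.1 • q.2)) '' (Icc 0 M ×ˢ C)) := fun a =>
    (isCompact_Icc.prod hC).image (by fun_prop)
  rw [key]
  obtain ⟨a₀, ha₀⟩ := hA
  exact (hcpt ⟨a₀, ha₀⟩).of_isClosed_subset (isClosed_iInter fun a => (hcpt a).isClosed)
    (iInter_subset _ _)

/-- The infimum defining the circumradius is attained. -/
lemma exists_mem_eq_circR {n : ℕ} {A C : Set (EuclideanSpace ℝ (Fin n))}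
    (hC : IsCompact C) (hC0 : 0 ∈ interior C) (hA : A.Nonempty) (hAbd : Bornology.IsBounded A) :
    0 ≤ circR A C ∧ ∃ x, A ⊆ circR A C • C + {x} := by
  obtain ⟨M, hM, x, hx⟩ := exists_subset_smul_add_singleton hC0 hAbd
  obtain ⟨_, ⟨⟨r, y⟩, ⟨hr, hy⟩, rfl⟩, hmin⟩ :=
    ((isCompact_admissible hC hA M).image continuous_fst).exists_isLeast
      ⟨M, (M, x), ⟨⟨hM, le_rfl⟩, hx⟩, rfl⟩
  have hleast : IsLeast {ρ : ℝ | 0 ≤ ρ ∧ ∃ x, A ⊆ ρ • C + {x}} r := by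
    refine ⟨⟨hr.1, y, hy⟩, ?_⟩
    rintro ρ ⟨hρ, z, hz⟩
    rcases le_total ρ M with h | h
    · exact hmin ⟨(ρ, z), ⟨⟨hρ, h⟩, hz⟩, rfl⟩
    · exact hr.2.trans h
  have : circR A C = r := hleast.csInf_eq
  rw [this]
  exact hleast.1

lemma circR_le {n : ℕ} {A C : Set (EuclideanSpace ℝ (Fin n))} {ρ : ℝ} (hρ : 0 ≤ ρ)
    {x : EuclideanSpace ℝ (Fin n)} (h : A ⊆ ρ • C + {x}) : circR A C ≤ ρ :=
  csInf_le ⟨0, fun _ h => h.1⟩ ⟨hρ, x, h⟩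

lemma isCompact_ccSet {n : ℕ} {A C : Set (EuclideanSpace ℝ (Fin n))}
    (hC : IsCompact C) (hA : A.Nonempty) : IsCompact (ccSet A C) := by
  have hcpt : ∀ a : A, IsCompact ((fun c => (a : EuclideanSpace ℝ (Fin n)) - circR A C • c) '' C) :=
    fun a => hC.image (by fun_prop)
  have key : ccSet A C = ⋂ a : A, (fun c => (a : EuclideanSpace ℝ (Fin n)) - circR A C • c) '' C := by
    ext x
    simp only [mem_ccSet_iff, mem_iInter, mem_image, Subtype.forall,
      eq_sub_iff_add_eq, eq_comm, add_comm]
  rw [key]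
  obtain ⟨a₀, ha₀⟩ := hA
  exact (hcpt ⟨a₀, ha₀⟩).of_isClosed_subset (isClosed_iInter fun a => (hcpt a).isClosed)
    (iInter_subset _ _)

lemma convex_ccSet {n : ℕ} {A C : Set (EuclideanSpace ℝ (Fin n))} (hC : Convex ℝ C) :
    Convex ℝ (ccSet A C) := by
  intro x hx y hy s t hs ht hst
  rw [mem_ccSet_iff] at hx hy ⊢
  intro a ha
  obtain ⟨c, hc, h1⟩ := hx a ha
  obtain ⟨d, hd, h2⟩ := hy a ha
  refine ⟨s • c + t • d, hC hc hd hs ht hst, ?_⟩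
  rw [smul_add, smul_comm _ s, smul_comm _ t, h1, h2, smul_sub, smul_sub, sub_add_sub_comm,
    ← add_smul, hst, one_smul]

/-- At an interior point of the Chebyshev set, the radius could be decreased. -/
lemma interior_ccSet_eq_empty {n : ℕ} {A C : Set (EuclideanSpace ℝ (Fin n))}
    (hAbd : Bornology.IsBounded A) (hR : 0 < circR A C) : interior (ccSet A C) = ∅ := by
  by_contra! hne
  obtain ⟨x, hx⟩ := hne
  obtain ⟨ε, hε, hball⟩ := Metric.mem_nhds_iff.1 (mem_interior_iff_mem_nhds.1 hx)
  obtain ⟨L, hL, hAL⟩ := hAbd.subset_ball_lt 0 x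
  have ht : 0 < ε / L := by positivity
  -- The scale `t = ε / L` keeps `x - t (a - x)` within `ε` of `x`, since `‖a - x‖ < L`.
  have hsub : A ⊆ (circR A C / (1 + ε / L)) • C + {x} := by
    rw [subset_smul_add_singleton_iff]
    intro a ha
    have hmem : x - (ε / L) • (a - x) ∈ ccSet A C := by
      apply hball
      have : ‖a - x‖ < L := by simpa [dist_eq_norm] using hAL ha
      rw [Metric.mem_ball, dist_eq_norm, sub_sub_cancel_left, norm_neg, norm_smul,
        Real.norm_of_nonneg ht.le]
      calc ε / L * ‖a - x‖ < ε / L * L := by gcongr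
        _ = ε := by field_simp
    obtain ⟨c, hc, h⟩ := mem_ccSet_iff.1 hmem a ha
    refine ⟨c, hc, ?_⟩
    rw [div_eq_inv_mul, mul_smul, h, inv_smul_eq_iff₀ (by positivity)]
    module
  have h1 := circR_le (by positivity) hsub
  have h2 : circR A C / (1 + ε / L) < circR A C := div_lt_self hR (by linarith)
  linarith

/-- A convex set with empty interior has dimension below that of the ambient space. The truncated
subtraction is harmless: for `n = 0` both sides vanish. -/
lemma adim_le_of_interior_eq_empty {n : ℕ} {S : Set (EuclideanSpace ℝ (Fin n))}
    (hne : S.Nonempty) (hS : Convex ℝ S) (hint : interior S = ∅) : adim S ≤ n - 1 := by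
  have hle : adim S ≤ n := by
    simpa [adim] using Submodule.finrank_le (affineSpan ℝ S).direction
  have hneq : adim S ≠ n := by
    intro h
    have htop : (affineSpan ℝ S).direction = ⊤ :=
      Submodule.eq_top_of_finrank_eq (by simpa [adim] using h)
    rw [direction_affineSpan, ← AffineSubspace.affineSpan_eq_top_iff_vectorSpan_eq_top_of_nonempty
      ℝ _ _ hne, ← hS.interior_nonempty_iff_affineSpan_eq_top, hint] at htop
    exact not_nonempty_empty htop
  omega

/-- The Chebyshev set `cc(A,C)` of a bounded nonempty set is a nonempty compact convex
set of affine dimension at most `n − 1`. -/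
theorem ccSet_convex_body_dim_le {n : ℕ}
    (C : Set (EuclideanSpace ℝ (Fin n))) (hC : IsConvexBody C)
    (hC0 : 0 ∈ interior C)
    (A : Set (EuclideanSpace ℝ (Fin n))) (hA : A.Nonempty)
    (hAbd : Bornology.IsBounded A) :
    (ccSet A C).Nonempty ∧ IsCompact (ccSet A C) ∧ Convex ℝ (ccSet A C) ∧
      adim (ccSet A C) ≤ n - 1 := by
  obtain ⟨hR, x, hx⟩ := exists_mem_eq_circR hC.2.1 hC0 hA hAbd
  have hne : (ccSet A C).Nonempty := ⟨x, hx⟩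
  have hconv : Convex ℝ (ccSet A C) := convex_ccSet hC.2.2
  refine ⟨hne, isCompact_ccSet hC.2.1 hA, hconv, ?_⟩
  rcases hR.eq_or_lt with h0 | hpos
  · -- Radius zero: every circumcenter coincides with each point of `A`.
    obtain ⟨a, ha⟩ := hA
    have hsub : ∀ y ∈ ccSet A C, y = a := by
      intro y hy
      obtain ⟨c, -, h⟩ := mem_ccSet_iff.1 hy a ha
      rw [← h0, zero_smul] at h
      exact (sub_eq_zero.1 h.symm).symm
    have hsingle : ccSet A C = {a} := (hne.subset_singleton_iff).1 hsub
    rw [hsingle, adim, direction_affineSpan, vectorSpan_singleton, finrank_bot]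
    exact Nat.zero_le _
  · exact adim_le_of_interior_eq_empty hne hconv (interior_ccSet_eq_empty hAbd hpos)
end
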